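/- Let μ₁,…,μ_m be finite Borel measures on ℝ with finite first moments such that μ₁(ℝ) = ⋯ = μ_m(ℝ) and ((F_i−F_j)*(F_i−F_j))(x) ≥ 0 for all i,j ∈ {1,…,m} and all x ∈ ℝ, where F_i is the distribution function of μ_i. Let P and Q be polynomials in x₁,…,x_m with non-negative coefficients such that Q − P = Σ_{i≠j} R_{i,j}(x₁,…,x_m)·(x_i − x_j)², where the R_{i,j} are polynomials with non-negative coefficients. Then P(μ₁,…,μ_m) ≼_cx Q(μ₁,…,μ_m). -/

import Mathlib

open MeasureTheory Set

noncomputable def distFun (μ : Measure ℝ) (x : ℝ) : ℝ := (μ (Set.Iic x)).toReal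

/-- Convolution of two real functions with respect to Lebesgue measure. -/
noncomputable def fconv (h₁ h₂ : ℝ → ℝ) (A : ℝ) : ℝ := ∫ t, h₁ t * h₂ (A - t)

/-- Convex order for finite Borel measures on ℝ. -/
def ConvexOrder (μ ν : Measure ℝ) : Prop :=
  ∀ φ : ℝ → ℝ, ConvexOn ℝ Set.univ φ → Integrable φ μ → Integrable φ ν →
    ∫ x, φ x ∂μ ≤ ∫ x, φ x ∂ν

/-- Usual stochastic order: `μ ≤ₛₜ ν`. -/
def StochOrder (μ ν : Measure ℝ) : Prop :=
  μ Set.univ = ν Set.univ ∧ ∀ x : ℝ, distFun ν x ≤ distFun μ x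

/-- k-fold convolution power of a measure. -/
noncomputable def convPow (μ : Measure ℝ) : ℕ → Measure ℝ
  | 0 => Measure.dirac 0
  | n + 1 => Measure.conv (convPow μ n) μ

/-- Convolution of a list of measures. -/
noncomputable def convList : List (Measure ℝ) → Measure ℝ
  | [] => Measure.dirac 0
  | m :: l => Measure.conv m (convList l)

/-- Convolution polynomial of measures associated with a multivariate polynomial
with non-negative coefficients. -/
noncomputable def convPoly {m : ℕ} (P : MvPolynomial (Fin m) ℝ) (μ : Fin m → Measure ℝ) :
    Measure ℝ :=
  ∑ d ∈ P.support,
    ENNReal.ofReal (MvPolynomial.coeff d P) • convList (List.ofFn fun i => convPow (μ i) (d i))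

/-!
Up to affine functions, a convex function on `ℝ` is a positive mixture of hinges `max (a - x) 0`,
so measures with equal mass and mean are in convex order once their hinge integrals are ordered.
The hinge integral of `α ∗ β` at `a` is the convolution of the distribution functions of `α` and `β`
at `a`. Hence nonnegativity of `(F_μ - F_ν) * (F_μ - F_ν)` says exactly that `μ ∗ ν + ν ∗ μ` is
below `μ ∗ μ + ν ∗ ν`, which is the case `(x - y)²` of the theorem. The convex order is preserved
by convolution with a fixed measure, and `P ↦ ∫ ψ dP(μ₁, …, μ_m)` extends to a linear functional
on real polynomials, so `Q - P` can be treated one monomial of the `R_{i,j}` at a time.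
-/

open scoped ENNReal NNReal

theorem lipschitzWith_hinge (a : ℝ) : LipschitzWith 1 fun x => max (a - x) 0 := by
  simpa using ((LipschitzWith.const a).sub LipschitzWith.id).max_const 0

theorem convexOn_hinge (a : ℝ) : ConvexOn ℝ univ fun x => max (a - x) 0 :=
  ((convexOn_const a convex_univ).sub (concaveOn_id convex_univ)).sup
    (convexOn_const 0 convex_univ)

/-- A finite measure on `ℝ` with a finite first moment: the measures compared by the convex
order. Finiteness is bundled so that both properties pass to convolutions by instance search. -/
class HasFiniteFirstMoment (μ : Measure ℝ) : Prop extends IsFiniteMeasure μ where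
  integrable_id : Integrable (fun x : ℝ => x) μ

namespace HasFiniteFirstMoment

instance dirac (x : ℝ) : HasFiniteFirstMoment (Measure.dirac x) :=
  ⟨integrable_dirac (by simp)⟩

variable {μ ν : Measure ℝ} [HasFiniteFirstMoment μ]

theorem integrable_of_lipschitz {K : ℝ≥0} {ψ : ℝ → ℝ} (hψ : LipschitzWith K ψ) :
    Integrable ψ μ := by
  refine ((integrable_const |ψ 0|).add (integrable_id.abs.const_mul (K : ℝ))).mono'
    hψ.continuous.aestronglyMeasurable (.of_forall fun x => ?_)
  have hdist : |ψ x - ψ 0| ≤ K * |x| := by simpa [Real.dist_eq] using hψ.dist_le_mul x 0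
  have htri := abs_add_le (ψ 0) (ψ x - ψ 0)
  rw [add_sub_cancel] at htri
  exact htri.trans (by simpa using hdist)

theorem integrable_hinge (a : ℝ) : Integrable (fun x => max (a - x) 0) μ :=
  integrable_of_lipschitz (lipschitzWith_hinge a)

variable [HasFiniteFirstMoment ν]

instance add : HasFiniteFirstMoment (μ + ν) :=
  ⟨integrable_id.add_measure integrable_id⟩

instance conv : HasFiniteFirstMoment (μ ∗ ν) := by
  refine ⟨(integrable_map_measure (by fun_prop) (by fun_prop)).2 ?_⟩
  exact (integrable_id.comp_fst ν).add (integrable_id.comp_snd μ)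

end HasFiniteFirstMoment

open HasFiniteFirstMoment

theorem measureReal_conv_univ (μ ν : Measure ℝ) [IsFiniteMeasure μ] [IsFiniteMeasure ν] :
    (μ ∗ ν).real univ = μ.real univ * ν.real univ := by
  have h := integral_conv (μ := μ) (ν := ν) (integrable_const (1 : ℝ))
  simpa using h

theorem integral_id_conv (μ ν : Measure ℝ) [HasFiniteFirstMoment μ] [HasFiniteFirstMoment ν] :
    ∫ x, x ∂(μ ∗ ν) = ν.real univ * ∫ x, x ∂μ + μ.real univ * ∫ x, x ∂ν := by
  have hinner (x : ℝ) : ∫ y, (x + y) ∂ν = ν.real univ * x + ∫ y, y ∂ν := by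
    rw [integral_add (integrable_const _) integrable_id]
    simp
  simp_rw [integral_conv (integrable_id (μ := μ ∗ ν)), hinner]
  rw [integral_add (integrable_id.const_mul _) (integrable_const _), integral_const_mul]
  simp

theorem exists_stieltjesFunction_intervalIntegral_eq {φ : ℝ → ℝ} (hφ : ConvexOn ℝ univ φ) :
    ∃ f : StieltjesFunction ℝ, ∀ x, ∫ t in 0..x, f t = φ x - φ 0 := by
  set r : ℝ → ℝ := fun t => derivWithin φ (Ioi t) t
  have hr : Monotone r := by
    simpa [monotoneOn_univ] using hφ.monotoneOn_rightDeriv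
  have hφ_cont : Continuous φ := continuousOn_univ.1 (hφ.continuousOn isOpen_univ)
  have hae : ∀ᵐ t, hr.stieltjesFunction t = r t := by
    filter_upwards [hr.countable_not_continuousAt.ae_notMem volume] with t ht
    rw [hr.stieltjesFunction_eq, (not_not.1 ht).continuousWithinAt.rightLim_eq]
  refine ⟨hr.stieltjesFunction, fun x => ?_⟩
  calc ∫ t in 0..x, hr.stieltjesFunction t
    _ = ∫ t in 0..x, r t := intervalIntegral.integral_congr_ae (hae.mono fun t ht _ => ht)
    _ = φ x - φ 0 := intervalIntegral.integral_eq_sub_of_hasDeriv_right hφ_cont.continuousOn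
        (fun t _ => hφ.hasDerivWithinAt_rightDeriv_of_mem_interior (by simp))
        hr.intervalIntegrable

/-- The Peano kernel of the first-order Taylor formula
`φ x = φ 0 + r 0 * x + ∫ taylorKernel t x ∂ρ(t)` at the origin, where `r` is the right-continuous
derivative of the convex function `φ` and `ρ` the Stieltjes measure of `r`: the hinge at `t` that
vanishes on the side of `t` containing the origin. -/
noncomputable def taylorKernel (t x : ℝ) : ℝ :=
  if t ≤ 0 then max (t - x) 0 else max (x - t) 0

theorem taylorKernel_nonneg (t x : ℝ) : 0 ≤ taylorKernel t x := by
  unfold taylorKernel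
  split_ifs <;> exact le_max_right _ _

theorem measurable_uncurry_taylorKernel : Measurable (Function.uncurry taylorKernel) :=
  Measurable.ite (measurableSet_le measurable_fst measurable_const) (by fun_prop) (by fun_prop)

theorem exists_taylorKernel_eq_hinge_add_affine (t : ℝ) :
    ∃ c d : ℝ, ∀ x, taylorKernel t x = max (t - x) 0 + (c + d * x) := by
  rcases le_or_gt t 0 with ht | ht
  · exact ⟨0, 0, fun x => by simp [taylorKernel, ht]⟩
  · refine ⟨-t, 1, fun x => ?_⟩
    have hparts : max (x - t) 0 - max (t - x) 0 = x - t := by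
      simpa using max_zero_sub_eq_self (x - t)
    rw [taylorKernel, if_neg ht.not_ge]
    linarith

theorem volume_setOf_mem_uIoc (t x : ℝ) :
    volume {s | s ∈ uIoc 0 x ∧ t ∈ uIoc 0 s} = ENNReal.ofReal (taylorKernel t x) := by
  have hset : {s | s ∈ uIoc 0 x ∧ t ∈ uIoc 0 s} = if t ≤ 0 then Ioo x t else Icc t x := by
    ext s
    split_ifs <;> simp only [mem_ofPred_eq, mem_uIoc, mem_Ioo, mem_Icc] <;> grind
  rw [hset, taylorKernel]
  split_ifs <;> simp [ENNReal.ofReal_max]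

theorem lintegral_taylorKernel_eq_lintegral_uIoc (ρ : Measure ℝ) [SFinite ρ] (x : ℝ) :
    ∫⁻ t, ENNReal.ofReal (taylorKernel t x) ∂ρ = ∫⁻ s in uIoc 0 x, ρ (uIoc 0 s) := by
  set A : Set (ℝ × ℝ) := {p | p.1 ∈ uIoc 0 x ∧ p.2 ∈ uIoc 0 p.1}
  have hA : MeasurableSet A :=
    (measurable_fst measurableSet_uIoc).inter
      ((measurableSet_lt (by fun_prop) measurable_snd).inter
        (measurableSet_le measurable_snd (by fun_prop)))
  calc ∫⁻ t, ENNReal.ofReal (taylorKernel t x) ∂ρ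
    _ = (volume.prod ρ) A := by
      simp_rw [Measure.prod_apply_symm hA, ← volume_setOf_mem_uIoc]
      rfl
    _ = ∫⁻ s in uIoc 0 x, ρ (uIoc 0 s) := by
      rw [Measure.prod_apply hA, ← lintegral_indicator measurableSet_uIoc]
      refine lintegral_congr fun s => ?_
      by_cases hs : s ∈ uIoc 0 x <;> simp [A, hs]

theorem stieltjesFunction_measure_uIoc (f : StieltjesFunction ℝ) (s : ℝ) :
    f.measure (uIoc 0 s) = ENNReal.ofReal |f s - f 0| := by
  rcases le_total 0 s with hs | hs
  · rw [uIoc_of_le hs, f.measure_Ioc, abs_of_nonneg (sub_nonneg.2 (f.mono hs))]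
  · rw [uIoc_of_ge hs, f.measure_Ioc, abs_of_nonpos (sub_nonpos.2 (f.mono hs)), neg_sub]

theorem intervalIntegral_sub_eq_integral_uIoc_abs {f : ℝ → ℝ} (hf : Monotone f) (x : ℝ) :
    ∫ s in 0..x, (f s - f 0) = ∫ s in uIoc 0 x, |f s - f 0| := by
  rcases le_total 0 x with hx | hx
  · rw [intervalIntegral.integral_of_le hx, uIoc_of_le hx]
    refine setIntegral_congr_fun measurableSet_Ioc fun s hs => ?_
    exact (abs_of_nonneg (sub_nonneg.2 (hf hs.1.le))).symm
  · rw [intervalIntegral.integral_of_ge hx, uIoc_of_ge hx, ← integral_neg]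
    refine setIntegral_congr_fun measurableSet_Ioc fun s hs => ?_
    exact (abs_of_nonpos (sub_nonpos.2 (hf hs.2))).symm

theorem exists_eq_affine_add_lintegral_taylorKernel {φ : ℝ → ℝ} (hφ : ConvexOn ℝ univ φ) :
    ∃ (a b : ℝ) (ρ : Measure ℝ), SFinite ρ ∧ ∀ x, a + b * x ≤ φ x ∧
      ENNReal.ofReal (φ x - (a + b * x)) = ∫⁻ t, ENNReal.ofReal (taylorKernel t x) ∂ρ := by
  obtain ⟨f, hf⟩ := exists_stieltjesFunction_intervalIntegral_eq hφ
  have hf_int (x : ℝ) : IntervalIntegrable f volume 0 x := f.mono.intervalIntegrable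
  refine ⟨φ 0, f 0, f.measure, inferInstance, fun x => ?_⟩
  have hremainder : φ x - (φ 0 + f 0 * x) = ∫ s in uIoc 0 x, |f s - f 0| := by
    rw [← intervalIntegral_sub_eq_integral_uIoc_abs f.mono,
      intervalIntegral.integral_sub (hf_int x) intervalIntegrable_const, hf,
      intervalIntegral.integral_const, smul_eq_mul]
    ring
  refine ⟨sub_nonneg.1 (hremainder ▸ integral_nonneg fun s => abs_nonneg _), ?_⟩
  have habs_int : IntegrableOn (fun s => |f s - f 0|) (uIoc 0 x) :=
    (intervalIntegrable_iff.1 ((hf_int x).sub intervalIntegrable_const)).abs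
  rw [hremainder, ofReal_integral_eq_lintegral_ofReal habs_int (.of_forall fun s => abs_nonneg _),
    lintegral_taylorKernel_eq_lintegral_uIoc]
  simp_rw [stieltjesFunction_measure_uIoc]

section Comparison

variable {μ ν : Measure ℝ} [HasFiniteFirstMoment μ] [HasFiniteFirstMoment ν]

theorem integral_affine (a b : ℝ) :
    ∫ x, (a + b * x) ∂μ = a * μ.real univ + b * ∫ x, x ∂μ := by
  rw [integral_add (integrable_const _) (integrable_id.const_mul _), integral_const_mul]
  simp [mul_comm]

theorem integrable_affine (a b : ℝ) : Integrable (fun x => a + b * x) μ :=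
  (integrable_const a).add (integrable_id.const_mul b)

theorem lintegral_taylorKernel_le (hmass : μ.real univ = ν.real univ)
    (hmean : ∫ x, x ∂μ = ∫ x, x ∂ν)
    (hhinge : ∀ a, ∫ x, max (a - x) 0 ∂μ ≤ ∫ x, max (a - x) 0 ∂ν) (t : ℝ) :
    ∫⁻ x, ENNReal.ofReal (taylorKernel t x) ∂μ ≤ ∫⁻ x, ENNReal.ofReal (taylorKernel t x) ∂ν := by
  obtain ⟨c, d, hk⟩ := exists_taylorKernel_eq_hinge_add_affine t
  have hint (γ : Measure ℝ) [HasFiniteFirstMoment γ] : Integrable (taylorKernel t) γ := by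
    simpa only [funext hk] using! (integrable_hinge t).add (integrable_affine c d)
  rw [← ofReal_integral_eq_lintegral_ofReal (hint μ) (.of_forall (taylorKernel_nonneg t)),
    ← ofReal_integral_eq_lintegral_ofReal (hint ν) (.of_forall (taylorKernel_nonneg t))]
  refine ENNReal.ofReal_le_ofReal ?_
  simp_rw [hk, integral_add (integrable_hinge t) (integrable_affine c d), integral_affine, hmass,
    hmean]
  exact add_le_add_left (hhinge t) _

namespace ConvexOrder

theorem of_hinge (hmass : μ.real univ = ν.real univ) (hmean : ∫ x, x ∂μ = ∫ x, x ∂ν)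
    (hhinge : ∀ a, ∫ x, max (a - x) 0 ∂μ ≤ ∫ x, max (a - x) 0 ∂ν) : ConvexOrder μ ν := by
  intro φ hφ hφμ hφν
  obtain ⟨a, b, ρ, _, hφ_eq⟩ := exists_eq_affine_add_lintegral_taylorKernel hφ
  have hnonneg (x : ℝ) : 0 ≤ φ x - (a + b * x) := sub_nonneg.2 (hφ_eq x).1
  have hremainder_int {γ : Measure ℝ} [HasFiniteFirstMoment γ] (hφγ : Integrable φ γ) :
      Integrable (fun x => φ x - (a + b * x)) γ := hφγ.sub (integrable_affine a b)
  have hle : ∫⁻ x, ENNReal.ofReal (φ x - (a + b * x)) ∂μ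
      ≤ ∫⁻ x, ENNReal.ofReal (φ x - (a + b * x)) ∂ν := by
    have hmeas : Measurable (fun p : ℝ × ℝ => ENNReal.ofReal (taylorKernel p.2 p.1)) :=
      (measurable_uncurry_taylorKernel.comp measurable_swap).ennreal_ofReal
    simp_rw [(hφ_eq _).2]
    rw [lintegral_lintegral_swap (μ := μ) hmeas.aemeasurable,
      lintegral_lintegral_swap (μ := ν) hmeas.aemeasurable]
    exact lintegral_mono (lintegral_taylorKernel_le hmass hmean hhinge)
  have hremainder : ∫ x, (φ x - (a + b * x)) ∂μ ≤ ∫ x, (φ x - (a + b * x)) ∂ν := by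
    rwa [← ofReal_integral_eq_lintegral_ofReal (hremainder_int hφμ) (.of_forall hnonneg),
      ← ofReal_integral_eq_lintegral_ofReal (hremainder_int hφν) (.of_forall hnonneg),
      ENNReal.ofReal_le_ofReal_iff (integral_nonneg hnonneg)] at hle
  rw [integral_sub hφμ (integrable_affine a b), integral_sub hφν (integrable_affine a b),
    integral_affine, integral_affine, hmass, hmean] at hremainder
  linarith

/-- Convex Lipschitz functions are integrable and stable under translation, unlike the convex
functions integrable against two given measures. -/
theorem of_lipschitz
    (h : ∀ (ψ : ℝ → ℝ) (K : ℝ≥0), ConvexOn ℝ univ ψ → LipschitzWith K ψ →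
      ∫ x, ψ x ∂μ ≤ ∫ x, ψ x ∂ν) : ConvexOrder μ ν := by
  have hconst (c : ℝ) := h (fun _ => c) 0 (convexOn_const c convex_univ) (LipschitzWith.const c)
  have hneg := h (fun x => -x) 1 (concaveOn_id convex_univ).neg LipschitzWith.id.neg
  refine of_hinge ?_ ?_ fun a => h _ 1 (convexOn_hinge a) (lipschitzWith_hinge a)
  · refine le_antisymm ?_ ?_
    · simpa using hconst 1
    · simpa using hconst (-1)
  · refine le_antisymm (h _ 1 (convexOn_id convex_univ) LipschitzWith.id) ?_
    rwa [integral_neg, integral_neg, neg_le_neg_iff] at hneg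

theorem conv_left (h : ConvexOrder μ ν) (ρ : Measure ℝ) [HasFiniteFirstMoment ρ] :
    ConvexOrder (ρ ∗ μ) (ρ ∗ ν) := by
  refine of_lipschitz fun ψ K hψ hψK => ?_
  have hshift (x : ℝ) : LipschitzWith K (fun y => ψ (x + y)) := by
    simpa [Function.comp_def] using hψK.comp (isometry_add_left x).lipschitz
  have hint (γ : Measure ℝ) [HasFiniteFirstMoment γ] :
      Integrable (fun x => ∫ y, ψ (x + y) ∂γ) ρ :=
    ((integrable_map_measure hψK.continuous.aestronglyMeasurable (by fun_prop)).1
      (integrable_of_lipschitz (μ := ρ ∗ γ) hψK)).integral_prod_left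
  rw [integral_conv (integrable_of_lipschitz hψK), integral_conv (integrable_of_lipschitz hψK)]
  exact integral_mono (hint μ) (hint ν) fun x => h _ (hψ.translate_right x)
    (integrable_of_lipschitz (hshift x)) (integrable_of_lipschitz (hshift x))

end ConvexOrder
end Comparison

theorem monotone_distFun (μ : Measure ℝ) [IsFiniteMeasure μ] : Monotone (distFun μ) :=
  fun _ _ hxy => measureReal_mono (Iic_subset_Iic.2 hxy)

theorem distFun_nonneg (μ : Measure ℝ) (x : ℝ) : 0 ≤ distFun μ x := measureReal_nonneg

theorem lintegral_distFun_mul_distFun (μ ν : Measure ℝ) [IsFiniteMeasure μ] [IsFiniteMeasure ν]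
    (a : ℝ) : ∫⁻ t, ENNReal.ofReal (distFun μ t * distFun ν (a - t))
      = ∫⁻ y, ENNReal.ofReal (max (a - y) 0) ∂(μ ∗ ν) := by
  set A : Set (ℝ × ℝ × ℝ) := {q | q.2.1 ≤ q.1 ∧ q.2.2 ≤ a - q.1}
  have hA : MeasurableSet A :=
    (measurableSet_le measurable_snd.fst measurable_fst).inter
      (measurableSet_le measurable_snd.snd (measurable_fst.const_sub a))
  have hsection (t : ℝ) : μ.prod ν (Prod.mk t ⁻¹' A)
      = ENNReal.ofReal (distFun μ t * distFun ν (a - t)) := by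
    have hset : Prod.mk t ⁻¹' A = Iic t ×ˢ Iic (a - t) := rfl
    rw [hset, Measure.prod_prod, distFun, distFun, ← ENNReal.toReal_mul, ENNReal.ofReal_toReal]
    finiteness
  have hsection_swap (p : ℝ × ℝ) : volume ((fun t => (t, p)) ⁻¹' A)
      = ENNReal.ofReal (max (a - (p.1 + p.2)) 0) := by
    have hset : (fun t => (t, p)) ⁻¹' A = Icc p.1 (a - p.2) := by
      ext t
      exact and_congr_right fun _ => le_sub_comm
    rw [hset, Real.volume_Icc, ENNReal.ofReal_max, ENNReal.ofReal_zero, max_zero, sub_right_comm,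
      sub_sub]
  calc ∫⁻ t, ENNReal.ofReal (distFun μ t * distFun ν (a - t))
    _ = (volume.prod (μ.prod ν)) A := by simp_rw [Measure.prod_apply hA, hsection]
    _ = ∫⁻ p, ENNReal.ofReal (max (a - (p.1 + p.2)) 0) ∂(μ.prod ν) := by
      simp_rw [Measure.prod_apply_symm hA, hsection_swap]
    _ = ∫⁻ y, ENNReal.ofReal (max (a - y) 0) ∂(μ ∗ ν) := by
      rw [Measure.lintegral_conv_eq_lintegral_sum (by fun_prop)]

theorem integrable_distFun_mul_distFun (μ ν : Measure ℝ) [HasFiniteFirstMoment μ]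
    [HasFiniteFirstMoment ν] (a : ℝ) : Integrable fun t => distFun μ t * distFun ν (a - t) := by
  have hmeas : Measurable fun t => distFun μ t * distFun ν (a - t) :=
    (monotone_distFun μ).measurable.mul
      ((monotone_distFun ν).measurable.comp (measurable_const.sub measurable_id))
  refine (lintegral_ofReal_ne_top_iff_integrable hmeas.aestronglyMeasurable
    (.of_forall fun t => mul_nonneg (distFun_nonneg μ t) (distFun_nonneg ν (a - t)))).1 ?_
  rw [lintegral_distFun_mul_distFun]
  exact (lintegral_ofReal_ne_top_iff_integrable (integrable_hinge a).aestronglyMeasurable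
    (.of_forall fun y => le_max_right _ _)).2 (integrable_hinge a)

theorem fconv_distFun (μ ν : Measure ℝ) [HasFiniteFirstMoment μ] [HasFiniteFirstMoment ν] (a : ℝ) :
    fconv (distFun μ) (distFun ν) a = ∫ y, max (a - y) 0 ∂(μ ∗ ν) := by
  have hprod_nonneg (t : ℝ) : 0 ≤ distFun μ t * distFun ν (a - t) :=
    mul_nonneg (distFun_nonneg μ t) (distFun_nonneg ν (a - t))
  have hhinge_nonneg (y : ℝ) : 0 ≤ max (a - y) 0 := le_max_right _ _
  rw [fconv, integral_eq_lintegral_of_nonneg_ae (.of_forall hprod_nonneg)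
      (integrable_distFun_mul_distFun μ ν a).aestronglyMeasurable,
    lintegral_distFun_mul_distFun, integral_eq_lintegral_of_nonneg_ae (.of_forall hhinge_nonneg)
      (integrable_hinge a).aestronglyMeasurable]

section Square

variable (μ ν : Measure ℝ) [HasFiniteFirstMoment μ] [HasFiniteFirstMoment ν]

theorem fconv_distFun_sub_distFun (a : ℝ) :
    fconv (fun t => distFun μ t - distFun ν t) (fun t => distFun μ t - distFun ν t) a
      = ∫ y, max (a - y) 0 ∂(μ ∗ μ + ν ∗ ν) - ∫ y, max (a - y) 0 ∂(μ ∗ ν + ν ∗ μ) := by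
  have hexpand (t : ℝ) : (distFun μ t - distFun ν t) * (distFun μ (a - t) - distFun ν (a - t))
      = (distFun μ t * distFun μ (a - t) + distFun ν t * distFun ν (a - t))
        - (distFun μ t * distFun ν (a - t) + distFun ν t * distFun μ (a - t)) := by
    ring
  have hint (α β : Measure ℝ) [HasFiniteFirstMoment α] [HasFiniteFirstMoment β] :=
    integrable_distFun_mul_distFun α β a
  simp_rw [fconv, hexpand]
  rw [integral_sub (by exact (hint μ μ).add (hint ν ν)) (by exact (hint μ ν).add (hint ν μ)),
    integral_add (hint μ μ) (hint ν ν), integral_add (hint μ ν) (hint ν μ),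
    integral_add_measure (integrable_hinge a) (integrable_hinge a),
    integral_add_measure (integrable_hinge a) (integrable_hinge a)]
  simp only [← fconv_distFun, fconv]

theorem convexOrder_conv_add_conv (hmass : μ univ = ν univ)
    (hF : ∀ x, 0 ≤ fconv (fun t => distFun μ t - distFun ν t)
      (fun t => distFun μ t - distFun ν t) x) :
    ConvexOrder (μ ∗ ν + ν ∗ μ) (μ ∗ μ + ν ∗ ν) := by
  have hmass_real : μ.real univ = ν.real univ := congrArg ENNReal.toReal hmass
  refine ConvexOrder.of_hinge ?_ ?_ fun a => ?_
  · rw [measureReal_add_apply, measureReal_add_apply]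
    simp only [measureReal_conv_univ, hmass_real]
  · rw [integral_add_measure integrable_id integrable_id,
      integral_add_measure integrable_id integrable_id]
    simp only [integral_id_conv, hmass_real]
    ring
  · rw [← sub_nonneg, ← fconv_distFun_sub_distFun]
    exact hF a

end Square

theorem convPow_induction {p : Measure ℝ → Prop} (hdirac : p (Measure.dirac 0))
    (hconv : ∀ μ ν, p μ → p ν → p (μ ∗ ν)) {μ : Measure ℝ} (hμ : p μ) (n : ℕ) :
    p (convPow μ n) := by
  induction n with
  | zero => exact hdirac
  | succ n ih => exact hconv _ _ ih hμ

theorem convList_induction {p : Measure ℝ → Prop} (hdirac : p (Measure.dirac 0))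
    (hconv : ∀ μ ν, p μ → p ν → p (μ ∗ ν)) {l : List (Measure ℝ)} (hl : ∀ μ ∈ l, p μ) :
    p (convList l) := by
  induction l with
  | nil => exact hdirac
  | cons μ l ih =>
    rw [List.forall_mem_cons] at hl
    exact hconv _ _ hl.1 (ih hl.2)

instance isFiniteMeasure_convPow (μ : Measure ℝ) [IsFiniteMeasure μ] (n : ℕ) :
    IsFiniteMeasure (convPow μ n) :=
  convPow_induction (p := fun μ => IsFiniteMeasure μ) inferInstance
    (fun _ _ _ _ => inferInstance) ‹_› n

theorem charFun_convPow (μ : Measure ℝ) [IsFiniteMeasure μ] (n : ℕ) (t : ℝ) :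
    charFun (convPow μ n) t = charFun μ t ^ n := by
  induction n with
  | zero => simp [convPow]
  | succ n ih => rw [convPow, charFun_conv, ih, pow_succ]

theorem charFun_convList {l : List (Measure ℝ)} (hl : ∀ μ ∈ l, IsFiniteMeasure μ) (t : ℝ) :
    charFun (convList l) t = (l.map fun μ => charFun μ t).prod := by
  induction l with
  | nil => simp [convList]
  | cons μ l ih =>
    rw [List.forall_mem_cons] at hl
    have := hl.1
    have : IsFiniteMeasure (convList l) :=
      convList_induction (p := fun μ => IsFiniteMeasure μ) inferInstance
        (fun _ _ _ _ => inferInstance) hl.2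
    rw [convList, charFun_conv, ih hl.2, List.map_cons, List.prod_cons]

section ConvMonomial

variable {m : ℕ} (μ : Fin m → Measure ℝ)

/-- The convolution monomial `μ₁^{*d₁} * ⋯ * μ_m^{*d_m}`: the value of the monomial `x^d` in
`convPoly`. -/
noncomputable def convMonomial (d : Fin m →₀ ℕ) : Measure ℝ :=
  convList (List.ofFn fun i => convPow (μ i) (d i))

theorem convMonomial_induction {p : Measure ℝ → Prop} (hdirac : p (Measure.dirac 0))
    (hconv : ∀ μ ν, p μ → p ν → p (μ ∗ ν)) (hμ : ∀ i, p (μ i)) (d : Fin m →₀ ℕ) :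
    p (convMonomial μ d) :=
  convList_induction hdirac hconv
    (List.forall_mem_ofFn_iff.2 fun i => convPow_induction hdirac hconv (hμ i) (d i))

instance hasFiniteFirstMoment_convMonomial [∀ i, HasFiniteFirstMoment (μ i)]
    (d : Fin m →₀ ℕ) : HasFiniteFirstMoment (convMonomial μ d) :=
  convMonomial_induction (p := fun μ => HasFiniteFirstMoment μ) μ inferInstance
    (fun _ _ _ _ => inferInstance) (fun _ => inferInstance) d

theorem integrable_convPoly {f : ℝ → ℝ} (hf : ∀ d, Integrable f (convMonomial μ d))
    (P : MvPolynomial (Fin m) ℝ) : Integrable f (convPoly P μ) :=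
  integrable_finsetSum_measure.2 fun d _ => (hf d).smul_measure ENNReal.ofReal_ne_top

instance hasFiniteFirstMoment_convPoly [∀ i, HasFiniteFirstMoment (μ i)]
    (P : MvPolynomial (Fin m) ℝ) : HasFiniteFirstMoment (convPoly P μ) where
  toIsFiniteMeasure := (integrable_const_iff_isFiniteMeasure one_ne_zero).1
    (integrable_convPoly μ (fun _ => integrable_const (1 : ℝ)) P)
  integrable_id := integrable_convPoly μ (fun _ => integrable_id) P

variable [∀ i, IsFiniteMeasure (μ i)]

instance isFiniteMeasure_convMonomial (d : Fin m →₀ ℕ) : IsFiniteMeasure (convMonomial μ d) :=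
  convMonomial_induction (p := fun μ => IsFiniteMeasure μ) μ inferInstance
    (fun _ _ _ _ => inferInstance) ‹_› d

theorem charFun_convMonomial (d : Fin m →₀ ℕ) (t : ℝ) :
    charFun (convMonomial μ d) t = ∏ i, charFun (μ i) t ^ d i := by
  rw [convMonomial, charFun_convList (List.forall_mem_ofFn_iff.2 fun i => inferInstance),
    List.map_ofFn, List.prod_ofFn]
  simp only [Function.comp_apply, charFun_convPow]

theorem convMonomial_add (d e : Fin m →₀ ℕ) :
    convMonomial μ (d + e) = convMonomial μ d ∗ convMonomial μ e := by
  refine Measure.ext_of_charFun (funext fun t => ?_)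
  simp only [charFun_conv, charFun_convMonomial, Finsupp.add_apply, pow_add,
    Finset.prod_mul_distrib]

theorem convMonomial_single (i : Fin m) : convMonomial μ (Finsupp.single i 1) = μ i := by
  refine Measure.ext_of_charFun (funext fun t => ?_)
  rw [charFun_convMonomial, Finset.prod_eq_single i] <;> simp +contextual

end ConvMonomial

section IntegralFunctional

variable {m : ℕ} (μ : Fin m → Measure ℝ)

/-- The linear functional `P ↦ ∫ ψ d P(μ₁, …, μ_m)` on all real polynomials. Coefficients of any
sign are allowed here, whereas `convPoly` truncates negative ones to `0`. -/
noncomputable def convPolyIntegral (ψ : ℝ → ℝ) : MvPolynomial (Fin m) ℝ →ₗ[ℝ] ℝ :=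
  (MvPolynomial.basisMonomials (Fin m) ℝ).constr ℝ fun d => ∫ x, ψ x ∂(convMonomial μ d)

theorem convPolyIntegral_monomial (ψ : ℝ → ℝ) (d : Fin m →₀ ℕ) (c : ℝ) :
    convPolyIntegral μ ψ (MvPolynomial.monomial d c) = c * ∫ x, ψ x ∂(convMonomial μ d) := by
  have hbasis : MvPolynomial.monomial d c = c • MvPolynomial.basisMonomials (Fin m) ℝ d := by
    simp [MvPolynomial.smul_monomial]
  rw [hbasis, map_smul, convPolyIntegral, Module.Basis.constr_basis, smul_eq_mul]

variable {μ}

theorem integral_convPoly {ψ : ℝ → ℝ} (hψ : ∀ d, Integrable ψ (convMonomial μ d))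
    {P : MvPolynomial (Fin m) ℝ} (hP : ∀ d, 0 ≤ P.coeff d) :
    ∫ x, ψ x ∂(convPoly P μ) = convPolyIntegral μ ψ P := by
  calc ∫ x, ψ x ∂(convPoly P μ)
    _ = ∑ d ∈ P.support, ∫ x, ψ x ∂(ENNReal.ofReal (P.coeff d) • convMonomial μ d) :=
      integral_finsetSum_measure fun d _ => (hψ d).smul_measure ENNReal.ofReal_ne_top
    _ = ∑ d ∈ P.support, convPolyIntegral μ ψ (MvPolynomial.monomial d (P.coeff d)) := by
      refine Finset.sum_congr rfl fun d _ => ?_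
      rw [integral_smul_measure, ENNReal.toReal_ofReal (hP d), smul_eq_mul,
        convPolyIntegral_monomial]
    _ = convPolyIntegral μ ψ P := by rw [← map_sum, ← P.as_sum]

theorem convPolyIntegral_monomial_mul_X_mul_X [∀ i, IsFiniteMeasure (μ i)] (ψ : ℝ → ℝ)
    (d : Fin m →₀ ℕ) (c : ℝ) (i j : Fin m) :
    convPolyIntegral μ ψ (MvPolynomial.monomial d c * (MvPolynomial.X i * MvPolynomial.X j))
      = c * ∫ x, ψ x ∂(convMonomial μ d ∗ (μ i ∗ μ j)) := by
  simp only [MvPolynomial.X, MvPolynomial.monomial_mul, mul_one, convPolyIntegral_monomial,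
    convMonomial_add, convMonomial_single]

theorem convPolyIntegral_mul_sub_sq_nonneg [∀ i, HasFiniteFirstMoment (μ i)] {ψ : ℝ → ℝ}
    {K : ℝ≥0} (hψ : ConvexOn ℝ univ ψ) (hψK : LipschitzWith K ψ) {i j : Fin m}
    (hij : ConvexOrder (μ i ∗ μ j + μ j ∗ μ i) (μ i ∗ μ i + μ j ∗ μ j))
    {R : MvPolynomial (Fin m) ℝ} (hR : ∀ d, 0 ≤ R.coeff d) :
    0 ≤ convPolyIntegral μ ψ (R * (MvPolynomial.X i - MvPolynomial.X j) ^ 2) := by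
  have hsq : (MvPolynomial.X i - MvPolynomial.X j : MvPolynomial (Fin m) ℝ) ^ 2
      = (MvPolynomial.X i * MvPolynomial.X i + MvPolynomial.X j * MvPolynomial.X j)
        - (MvPolynomial.X i * MvPolynomial.X j + MvPolynomial.X j * MvPolynomial.X i) := by
    ring
  rw [R.as_sum, Finset.sum_mul, map_sum]
  refine Finset.sum_nonneg fun d _ => ?_
  have hle := hij.conv_left (convMonomial μ d) ψ hψ (integrable_of_lipschitz hψK)
    (integrable_of_lipschitz hψK)
  have hsplit (α β : Measure ℝ) [HasFiniteFirstMoment α] [HasFiniteFirstMoment β] :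
      ∫ x, ψ x ∂(convMonomial μ d ∗ (α + β))
        = ∫ x, ψ x ∂(convMonomial μ d ∗ α) + ∫ x, ψ x ∂(convMonomial μ d ∗ β) := by
    rw [Measure.conv_add,
      integral_add_measure (integrable_of_lipschitz hψK) (integrable_of_lipschitz hψK)]
  rw [hsplit, hsplit] at hle
  simp only [hsq, mul_sub, mul_add, map_sub, map_add, convPolyIntegral_monomial_mul_X_mul_X]
  simp only [← mul_add, ← mul_sub]
  exact mul_nonneg (hR d) (sub_nonneg.2 hle)

end IntegralFunctional

/-- Theorem 3.2: if μ₁,…,μ_m have equal total masses,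
(Fᵢ−Fⱼ)∗(Fᵢ−Fⱼ) ≥ 0 for all i,j, and Q − P = Σ_{i≠j} R_{i,j}·(xᵢ−xⱼ)² with all
polynomials having non-negative coefficients, then P(μ₁,…,μ_m) ≼ₓ Q(μ₁,…,μ_m). -/
theorem stmt10 (m : ℕ) (μ : Fin m → Measure ℝ) [∀ i, IsFiniteMeasure (μ i)]
    (hint : ∀ i, Integrable (fun x : ℝ => |x|) (μ i))
    (hmass : ∀ i j, μ i Set.univ = μ j Set.univ)
    (hF : ∀ i j, ∀ x : ℝ, 0 ≤ fconv (fun t => distFun (μ i) t - distFun (μ j) t)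
      (fun t => distFun (μ i) t - distFun (μ j) t) x)
    (P Q : MvPolynomial (Fin m) ℝ)
    (hP : ∀ d, 0 ≤ MvPolynomial.coeff d P) (hQ : ∀ d, 0 ≤ MvPolynomial.coeff d Q)
    (R : Fin m → Fin m → MvPolynomial (Fin m) ℝ)
    (hR : ∀ i j d, 0 ≤ MvPolynomial.coeff d (R i j))
    (hdiff : Q - P = ∑ i : Fin m, ∑ j : Fin m,
      if i ≠ j then R i j * (MvPolynomial.X i - MvPolynomial.X j) ^ 2 else 0) :
    ConvexOrder (convPoly P μ) (convPoly Q μ) := by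
  have (i : Fin m) : HasFiniteFirstMoment (μ i) :=
    ⟨(integrable_norm_iff (by fun_prop)).1 (hint i)⟩
  refine ConvexOrder.of_lipschitz fun ψ K hψ hψK => ?_
  have hψ_int (d : Fin m →₀ ℕ) : Integrable ψ (convMonomial μ d) := integrable_of_lipschitz hψK
  rw [integral_convPoly hψ_int hP, integral_convPoly hψ_int hQ, ← sub_nonneg, ← map_sub, hdiff]
  simp only [map_sum]
  refine Finset.sum_nonneg fun i _ => Finset.sum_nonneg fun j _ => ?_
  split_ifs
  · exact convPolyIntegral_mul_sub_sq_nonneg hψ hψK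
      (convexOrder_conv_add_conv (μ i) (μ j) (hmass i j) (hF i j)) (hR i j)
  · rw [map_zero]
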